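/- arXiv:2209.12246 — 2 statements merged into one kernel-verified Lean document; each statement's English description precedes it below -/
import Mathlib

section
/- Let Ω be a class of unital C*-algebras and let A be a simple unital C*-algebra such that A and all algebras in Ω are unital. If A belongs to the class GTAΩ, then A belongs to the class WTAΩ. -/
open Filter Topology

/-- An element of a C*-algebra is positive if it is of the form `x* x`. -/
def IsPos {A : Type*} [Mul A] [Star A] (a : A) : Prop := ∃ x : A, a = star x * x

/-- Cuntz subequivalence `a ≾_A b`. -/
def CuntzBelow {A : Type*} [NonUnitalNormedRing A] [Star A] (a b : A) : Prop :=
  ∃ v : ℕ → A, Tendsto (fun n => ‖v n * b * star (v n) - a‖) atTop (nhds 0)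

/-- `x ∈_ε S`: `x` lies within `ε` of the set `S`. -/
def ApproxIn {A : Type*} [NormedAddGroup A] (x : A) (S : Set A) (ε : ℝ) : Prop :=
  ∃ y ∈ S, ‖x - y‖ < ε

/-- `(a - ε)₊`, via continuous functional calculus. -/
noncomputable def CutPos {A : Type*} [CStarAlgebra A] (a : A) (ε : ℝ) : A :=
  cfc (fun t : ℝ => max (t - ε) 0) a

/-- A C*-algebra is simple if it is nontrivial and has no proper nontrivial
closed two-sided ideals. -/
def IsSimpleCStarAlgebra (A : Type*) [NonUnitalNormedRing A] : Prop :=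
  Nontrivial A ∧ ∀ I : TwoSidedIdeal A, IsClosed (I : Set A) →
    (I : Set A) = {0} ∨ (I : Set A) = Set.univ

variable {A : Type*} [CStarAlgebra A]

/-- Membership in the class `WTAΩ` (Elliott–Fan–Fang weak tracial approximation),
where the class `Ω` is modelled as a set of (C*-)subalgebras of `A`. -/
def MemWTA (Ω : Set (NonUnitalStarSubalgebra ℂ A)) : Prop :=
  ∀ ε : ℝ, 0 < ε → ∀ F : Finset A, ∀ a : A, IsPos a → a ≠ 0 →
    ∃ B ∈ Ω, IsClosed (B : Set A) ∧
      ∃ p ∈ B, IsSelfAdjoint p ∧ p * p = p ∧ (∀ b ∈ B, p * b = b ∧ b * p = b) ∧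
        ∃ g ∈ B, IsPos g ∧ IsPos (1 - g) ∧
          (∀ x ∈ F, ApproxIn ((p - g) * x) (B : Set A) ε ∧
            ApproxIn (x * (p - g)) (B : Set A) ε) ∧
          (∀ x ∈ F, ‖(p - g) * x - x * (p - g)‖ < ε) ∧
          CuntzBelow (1 - (p - g)) a ∧
          ‖a‖ - ε ≤ ‖(p - g) * a * (p - g)‖

/-- Membership in the class `GTAΩ` (generalized/weak tracial approximation),
where the class `Ω` is modelled as a set of (C*-)subalgebras of `A`. -/
def MemGTA (Ω : Set (NonUnitalStarSubalgebra ℂ A)) : Prop :=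
  ∀ ε : ℝ, 0 < ε → ∀ F : Finset A, ∀ a b : A, IsPos a → ‖a‖ = 1 → IsPos b → ‖b‖ ≤ 1 →
    ∃ B ∈ Ω, IsClosed (B : Set A) ∧
      ∃ r ∈ B, IsPos r ∧ ‖r‖ ≤ 1 ∧
        (∀ x ∈ F, ApproxIn (r * x) (B : Set A) ε ∧ ApproxIn (x * r) (B : Set A) ε) ∧
        (∀ x ∈ F, ‖r * x - x * r‖ < ε) ∧
        CuntzBelow (CutPos (b * b - b * r * b) ε) a ∧
        1 - ε ≤ ‖r * a * r‖

/-!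
Applying the `GTA` condition with `b = 1` gives a positive contraction `r ∈ B` for which only
`(1 - r - δ)₊`, not `1 - r` itself, is Cuntz below `a`. Stretching the spectrum of `r` by
`t ↦ min ((1 - δ)⁻¹ * t) 1` cures this: the resulting contraction `s` satisfies
`1 - s = (1 - δ)⁻¹ • (1 - r - δ)₊` and `‖s - r‖ ≤ δ`, so that it inherits every approximate
property of `r`, and it lies in `B` because the stretching function vanishes at `0`. As `B` has a
unit `p`, the element `g = p - s` is a positive contraction in `B` with `p - g = s`.
-/

theorem exists_pos_lt_one_forall_mul_le {ι : Type*} (F : Finset ι) (f : ι → ℝ) {ε : ℝ}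
    (hε : 0 < ε) : ∃ δ : ℝ, 0 < δ ∧ δ < 1 ∧ ∀ i ∈ F, δ * f i ≤ ε := by
  have hsmall : ∀ᶠ δ in 𝓝[>] (0 : ℝ), ∀ i ∈ F, δ * f i < ε :=
    (eventually_all_finset F).2 fun i _ =>
      ((continuous_mul_const (f i)).tendsto' 0 0 (zero_mul _)).mono_left nhdsWithin_le_nhds
        |>.eventually_lt_const hε
  obtain ⟨δ, hδF, hδ⟩ := (hsmall.and (Ioo_mem_nhdsGT one_pos)).exists
  exact ⟨δ, hδ.1, hδ.2, fun i hi => (hδF i hi).le⟩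

/-- The continuous function that stretches `[0, 1 - δ]` linearly onto `[0, 1]` and is constantly
`1` beyond `1 - δ`. Applied to a positive contraction `r`, it moves `r` by at most `δ` and turns
`1 - r` into a multiple of `(1 - r - δ)₊`. -/
noncomputable def stretch (δ t : ℝ) : ℝ := min ((1 - δ)⁻¹ * t) 1

namespace stretch

variable {δ t : ℝ}

@[fun_prop]
theorem continuous (δ : ℝ) : Continuous (stretch δ) := by unfold stretch; fun_prop

theorem apply_zero (δ : ℝ) : stretch δ 0 = 0 := by simp [stretch]

theorem nonneg (hδ : δ < 1) (ht : 0 ≤ t) : 0 ≤ stretch δ t :=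
  le_min (mul_nonneg (inv_nonneg.2 (sub_nonneg.2 hδ.le)) ht) zero_le_one

theorem le_one (δ t : ℝ) : stretch δ t ≤ 1 := min_le_right _ _

theorem one_sub (hδ : δ < 1) (t : ℝ) :
    1 - stretch δ t = (1 - δ)⁻¹ * max (1 - t - δ) 0 := by
  have hδ' : 0 < 1 - δ := sub_pos.2 hδ
  rw [stretch, ← max_sub_sub_left, sub_self, mul_max_of_nonneg _ _ (inv_nonneg.2 hδ'.le), mul_zero]
  congr 1
  field_simp
  ring

theorem abs_sub_le (hδ0 : 0 ≤ δ) (hδ : δ < 1) (ht : t ∈ Set.Icc 0 1) : |stretch δ t - t| ≤ δ := by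
  have hinv : 1 ≤ (1 - δ)⁻¹ := one_le_inv_iff₀.2 ⟨sub_pos.2 hδ, sub_le_self _ hδ0⟩
  have hlower : t ≤ stretch δ t := le_min (le_mul_of_one_le_left ht.1 hinv) ht.2
  have hupper : 1 - t - δ ≤ 1 - stretch δ t :=
    calc 1 - t - δ ≤ max (1 - t - δ) 0 := le_max_left _ _
      _ ≤ (1 - δ)⁻¹ * max (1 - t - δ) 0 := le_mul_of_one_le_left (le_max_right _ _) hinv
      _ = 1 - stretch δ t := (one_sub hδ t).symm
  rw [abs_le]
  constructor <;> linarith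

end stretch

theorem ApproxIn.of_norm_sub_add_le {E : Type*} [NormedAddGroup E] {x y : E} {S : Set E} {ε η : ℝ}
    (hx : ApproxIn x S ε) (hyx : ‖y - x‖ + ε ≤ η) : ApproxIn y S η := by
  obtain ⟨z, hz, hxz⟩ := hx
  refine ⟨z, hz, ?_⟩
  calc ‖y - z‖ ≤ ‖y - x‖ + ‖x - z‖ := norm_sub_le_norm_sub_add_norm_sub y x z
    _ < ‖y - x‖ + ε := by gcongr
    _ ≤ η := hyx

section NonUnitalSeminormedRing

variable {R : Type*} [NonUnitalSeminormedRing R]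

theorem norm_commutator_le_add (r s x : R) :
    ‖s * x - x * s‖ ≤ ‖r * x - x * r‖ + 2 * ‖s - r‖ * ‖x‖ := by
  have hdecomp : s * x - x * s = (r * x - x * r) + ((s - r) * x - x * (s - r)) := by noncomm_ring
  rw [hdecomp]
  linarith [norm_add_le (r * x - x * r) ((s - r) * x - x * (s - r)),
    norm_sub_le ((s - r) * x) (x * (s - r)), norm_mul_le (s - r) x, norm_mul_le x (s - r)]

theorem norm_mul_mul_self_le_add (r s a : R) :
    ‖r * a * r‖ ≤ ‖s * a * s‖ + (‖r‖ + ‖s‖) * ‖s - r‖ * ‖a‖ := by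
  have hdecomp : r * a * r = s * a * s - ((s - r) * a * s + r * a * (s - r)) := by noncomm_ring
  have hleft : ‖(s - r) * a * s‖ ≤ ‖s - r‖ * ‖a‖ * ‖s‖ := norm_mul₃_le
  have hright : ‖r * a * (s - r)‖ ≤ ‖r‖ * ‖a‖ * ‖s - r‖ := norm_mul₃_le
  rw [hdecomp]
  linarith [norm_sub_le (s * a * s) ((s - r) * a * s + r * a * (s - r)),
    norm_add_le ((s - r) * a * s) (r * a * (s - r))]

end NonUnitalSeminormedRing

namespace CuntzBelow

variable {R : Type*} [NonUnitalNormedRing R] [Star R] [NormedSpace ℝ R] [IsScalarTower ℝ R R]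
  [SMulCommClass ℝ R R] [StarModule ℝ R] {a b : R} {c : ℝ}

theorem sqrt_smul_mul_mul_star (hc : 0 ≤ c) (v b : R) :
    (√c • v) * b * star (√c • v) = c • (v * b * star v) := by
  rw [star_smul, star_trivial, smul_mul_assoc, smul_mul_smul_comm, Real.mul_self_sqrt hc]

theorem smul_left (hc : 0 ≤ c) (h : CuntzBelow a b) : CuntzBelow (c • a) b := by
  obtain ⟨v, hv⟩ := h
  refine ⟨fun n => √c • v n, ?_⟩
  simpa only [sqrt_smul_mul_mul_star hc, ← smul_sub, norm_smul, mul_zero] using hv.const_mul ‖c‖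

theorem of_smul_right (hc : 0 ≤ c) (h : CuntzBelow a (c • b)) : CuntzBelow a b := by
  obtain ⟨v, hv⟩ := h
  refine ⟨fun n => √c • v n, ?_⟩
  simpa only [mul_smul_comm, smul_mul_assoc, ← sqrt_smul_mul_mul_star hc] using hv

end CuntzBelow

theorem isStarProjection_of_mem_of_forall_mul_eq {R S : Type*} [Mul R] [StarMul R] [SetLike S R]
    [StarMemClass S R] {B : S} {e : R} (he : e ∈ B) (hleft : ∀ b ∈ B, e * b = b) :
    IsStarProjection e where
  isIdempotentElem := hleft e he
  isSelfAdjoint := by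
    have hstar : e * star e = star e := hleft _ (star_mem he)
    exact IsSelfAdjoint.star_iff.1 (hstar ▸ IsSelfAdjoint.mul_star_self e)

theorem cfc_stretch_mem {B : NonUnitalStarSubalgebra ℂ A} (hB : IsClosed (B : Set A)) {r : A}
    (hr : r ∈ B) (δ : ℝ) : cfc (stretch δ) r ∈ B := by
  rw [← cfcₙ_eq_cfc (hf0 := stretch.apply_zero δ)]
  exact cfcₙ_mem (𝕜' := ℂ) (hs := hB) (stretch δ) hr

theorem one_sub_cfc_stretch {r : A} (hr : IsSelfAdjoint r) {δ : ℝ} (hδ : δ < 1) :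
    1 - cfc (stretch δ) r = (1 - δ)⁻¹ • CutPos (1 - r) δ := by
  have hone_sub : 1 - r = cfc (fun t : ℝ => 1 - t) r := by
    rw [cfc_sub (fun _ => (1 : ℝ)) (fun t => t) r, cfc_const_one ℝ r, cfc_id' ℝ r]
  calc 1 - cfc (stretch δ) r = cfc (fun t => 1 - stretch δ t) r := by
        rw [cfc_sub (fun _ => (1 : ℝ)) (stretch δ) r, cfc_const_one ℝ r]
    _ = cfc (fun t => (1 - δ)⁻¹ • max (1 - t - δ) 0) r := by
        simp only [stretch.one_sub hδ, smul_eq_mul]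
    _ = (1 - δ)⁻¹ • CutPos (1 - r) δ := by
        rw [CutPos, hone_sub, ← cfc_comp' (fun t : ℝ => max (t - δ) 0) (fun t => 1 - t) r,
          cfc_smul (1 - δ)⁻¹ (fun t => max (1 - t - δ) 0) r]

section Order

variable [PartialOrder A] [StarOrderedRing A]

theorem isPos_iff_nonneg {a : A} : IsPos a ↔ 0 ≤ a :=
  CStarAlgebra.nonneg_iff_eq_star_mul_self.symm

section CFC

variable {r : A} {δ : ℝ}

theorem spectrum_subset_Icc_zero_one (hr0 : 0 ≤ r) (hr1 : r ≤ 1) :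
    spectrum ℝ r ⊆ Set.Icc 0 1 := fun t ht =>
  ⟨spectrum_nonneg_of_nonneg hr0 ht, (CFC.le_one_iff r).1 hr1 t ht⟩

theorem cfc_stretch_nonneg (hr : 0 ≤ r) (hδ : δ < 1) : 0 ≤ cfc (stretch δ) r :=
  cfc_nonneg fun _ ht => stretch.nonneg hδ (spectrum_nonneg_of_nonneg hr ht)

theorem cfc_stretch_le_one (δ : ℝ) (r : A) : cfc (stretch δ) r ≤ 1 :=
  cfc_le_one _ _ fun t _ => stretch.le_one δ t

theorem norm_cfc_stretch_sub_self_le (hr0 : 0 ≤ r) (hr1 : r ≤ 1) (hδ0 : 0 ≤ δ) (hδ : δ < 1) :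
    ‖cfc (stretch δ) r - r‖ ≤ δ := by
  have hsub : cfc (stretch δ) r - r = cfc (fun t => stretch δ t - t) r := by
    rw [cfc_sub (stretch δ) (fun t => t) r, cfc_id' ℝ r]
  rw [hsub]
  exact norm_cfc_le hδ0 fun t ht =>
    stretch.abs_sub_le hδ0 hδ (spectrum_subset_Icc_zero_one hr0 hr1 ht)

end CFC

variable {Ω : Set (NonUnitalStarSubalgebra ℂ A)}

theorem MemGTA.exists_cuntzBelow_cutPos_one_sub (h : MemGTA Ω) {ε : ℝ} (hε : 0 < ε) (F : Finset A)
    {a : A} (ha : 0 ≤ a) (ha0 : a ≠ 0) :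
    ∃ B ∈ Ω, IsClosed (B : Set A) ∧ ∃ r ∈ B, 0 ≤ r ∧ r ≤ 1 ∧
      (∀ x ∈ F, ApproxIn (r * x) (B : Set A) ε ∧ ApproxIn (x * r) (B : Set A) ε) ∧
      (∀ x ∈ F, ‖r * x - x * r‖ < ε) ∧
      CuntzBelow (CutPos (1 - r) ε) a ∧ (1 - ε) * ‖a‖ ≤ ‖r * a * r‖ := by
  have hnorm : 0 < ‖a‖ := norm_pos_iff.2 ha0
  have hinv : 0 ≤ ‖a‖⁻¹ := inv_nonneg.2 hnorm.le
  obtain ⟨B, hBΩ, hB, r, hrB, hr0, hr1, happrox, hcomm, hcut, hlower⟩ :=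
    h ε hε F (‖a‖⁻¹ • a) 1 (isPos_iff_nonneg.2 (smul_nonneg hinv ha))
      (by rw [norm_smul, norm_inv, norm_norm, inv_mul_cancel₀ hnorm.ne'])
      (isPos_iff_nonneg.2 zero_le_one) ((CStarAlgebra.norm_le_one_iff_of_nonneg 1).2 le_rfl)
  rw [isPos_iff_nonneg] at hr0
  rw [one_mul, one_mul, mul_one] at hcut
  rw [mul_smul_comm, smul_mul_assoc, norm_smul, norm_inv, norm_norm, le_inv_mul_iff₀ hnorm,
    mul_comm] at hlower
  exact ⟨B, hBΩ, hB, r, hrB, hr0, (CStarAlgebra.norm_le_one_iff_of_nonneg r).1 hr1, happrox, hcomm,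
    hcut.of_smul_right hinv, hlower⟩

theorem MemGTA.exists_cuntzBelow_one_sub (h : MemGTA Ω) {ε : ℝ} (hε : 0 < ε) (F : Finset A)
    {a : A} (ha : 0 ≤ a) (ha0 : a ≠ 0) :
    ∃ B ∈ Ω, IsClosed (B : Set A) ∧ ∃ s ∈ B, 0 ≤ s ∧ s ≤ 1 ∧
      (∀ x ∈ F, ApproxIn (s * x) (B : Set A) ε ∧ ApproxIn (x * s) (B : Set A) ε) ∧
      (∀ x ∈ F, ‖s * x - x * s‖ < ε) ∧
      CuntzBelow (1 - s) a ∧ ‖a‖ - ε ≤ ‖s * a * s‖ := by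
  classical
  -- Of `δ + 3 δ ‖x‖`, at most `2 δ ‖x‖` pays for replacing `r` by `s`, the rest for the `δ`
  -- tolerances of `r` itself.
  obtain ⟨δ, hδ0, hδ1, hδ⟩ := exists_pos_lt_one_forall_mul_le (insert a F)
    (fun x => 1 + 3 * ‖x‖) hε
  obtain ⟨B, hBΩ, hB, r, hrB, hr0, hr1, happrox, hcomm, hcut, hlower⟩ :=
    h.exists_cuntzBelow_cutPos_one_sub hδ0 F ha ha0
  set s := cfc (stretch δ) r
  have hs0 : 0 ≤ s := cfc_stretch_nonneg hr0 hδ1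
  have hs1 : s ≤ 1 := cfc_stretch_le_one δ r
  have hsr : ‖s - r‖ ≤ δ := norm_cfc_stretch_sub_self_le hr0 hr1 hδ0.le hδ1
  have hsrx (x : A) : ‖s - r‖ * ‖x‖ ≤ δ * ‖x‖ := by gcongr
  have hδx (x : A) : 0 ≤ δ * ‖x‖ := by positivity
  refine ⟨B, hBΩ, hB, s, cfc_stretch_mem hB hrB δ, hs0, hs1, fun x hx => ?_, fun x hx => ?_,
    ?_, ?_⟩
  · have hδε := hδ x (Finset.mem_insert_of_mem hx)
    constructor
    · refine (happrox x hx).1.of_norm_sub_add_le ?_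
      rw [← sub_mul]
      linarith [norm_mul_le (s - r) x, hsrx x, hδx x]
    · refine (happrox x hx).2.of_norm_sub_add_le ?_
      rw [← mul_sub]
      linarith [norm_mul_le x (s - r), hsrx x, hδx x]
  · have hδε := hδ x (Finset.mem_insert_of_mem hx)
    linarith [norm_commutator_le_add r s x, hcomm x hx, hsrx x, hδx x]
  · rw [one_sub_cfc_stretch (.of_nonneg hr0) hδ1]
    exact hcut.smul_left (inv_nonneg.2 (sub_nonneg.2 hδ1.le))
  · have hδε := hδ a (Finset.mem_insert_self a F)
    have hperturb : (‖r‖ + ‖s‖) * ‖s - r‖ * ‖a‖ ≤ (1 + 1) * δ * ‖a‖ := by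
      gcongr
      · exact (CStarAlgebra.norm_le_one_iff_of_nonneg r).2 hr1
      · exact (CStarAlgebra.norm_le_one_iff_of_nonneg s).2 hs1
    linarith [norm_mul_mul_self_le_add r s a]

end Order

theorem memWTA_of_memGTA_general {Ω : Set (NonUnitalStarSubalgebra ℂ A)}
    (hΩ : ∀ B ∈ Ω, ∃ e ∈ B, ∀ b ∈ B, e * b = b ∧ b * e = b) (h : MemGTA Ω) : MemWTA Ω := by
  let _ := CStarAlgebra.spectralOrder A
  have := CStarAlgebra.spectralOrderedRing A
  intro ε hε F a ha ha0
  obtain ⟨B, hBΩ, hB, s, hsB, hs0, hs1, happrox, hcomm, hcuntz, hlower⟩ :=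
    h.exists_cuntzBelow_one_sub hε F (isPos_iff_nonneg.1 ha) ha0
  obtain ⟨p, hpB, hp⟩ := hΩ B hBΩ
  have hproj : IsStarProjection p :=
    isStarProjection_of_mem_of_forall_mul_eq hpB fun b hb => (hp b hb).1
  have hsp : s ≤ p := by
    simpa only [(hp s hsB).1, (hp s hsB).2, mul_one, hproj.isIdempotentElem.eq] using
      hproj.isSelfAdjoint.conjugate_le_conjugate hs1
  refine ⟨B, hBΩ, hB, p, hpB, hproj.isSelfAdjoint, hproj.isIdempotentElem, hp, p - s,
    sub_mem hpB hsB, isPos_iff_nonneg.2 (sub_nonneg.2 hsp),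
    isPos_iff_nonneg.2 (sub_nonneg.2 ((sub_le_self p hs0).trans hproj.le_one)), ?_⟩
  rw [sub_sub_cancel]
  exact ⟨happrox, hcomm, hcuntz, hlower⟩

/-- If `A` is a simple unital C*-algebra, `Ω` is a class of unital
C*-algebras, and `A ∈ GTAΩ`, then `A ∈ WTAΩ`. -/
theorem memWTA_of_memGTA
    (hA : IsSimpleCStarAlgebra A)
    (Ω : Set (NonUnitalStarSubalgebra ℂ A))
    (hΩ : ∀ B ∈ Ω, ∃ e ∈ B, ∀ b ∈ B, e * b = b ∧ b * e = b)
    (h : MemGTA Ω) : MemWTA Ω :=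
  memWTA_of_memGTA_general hΩ h
end

section
/- Let Ω be a class of C*-algebras and let A be a finite, infinite-dimensional, simple, unital C*-algebra. Suppose that for every ε > 0, every finite subset F ⊆ A, and every nonzero a ∈ A_+, there exist a C*-subalgebra B ⊆ A with B ∈ Ω and an element r ∈ B_+ with ‖r‖ ≤ 1 such that: (1) rx ∈_ε B and xr ∈_ε B for all x ∈ F; (2) ‖rx − xr‖ < ε for all x ∈ F; (3) 1_A − r ⪯_A a. Then A belongs to the class GTAΩ. -/
open Filter Topology

variable {A : Type*} [CStarAlgebra A]

/-!
If `‖r * a * r‖ ≤ 1 - ε`, then some two-sided multiple of `1 - r` dominates a nonzero positive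
element depending only on `a` and `ε`. By simplicity `1` is then a sum of `n` terms
`u * (1 - r) * v`, with `n` independent of `r`. Write `a = star z * z`. Testing the hypothesis on
`e * star e`, where `e` is a nonzero left multiple of `star z`, gives
`1 - r ≾ e * star e ≾ star z * z = a`; if moreover `1` is not a sum of `n` terms `u * e * v`, then
`‖r * a * r‖` cannot be small.

Such an `e` exists: infinite-dimensionality provides an infinite sequence of orthogonal self-adjoint
elements, and by simplicity `e` can be chosen as a common two-sided multiple of the squares of `n`
of them. If `1` were a sum of `n` terms `u * e * v`, it would factor as `V * W` with `V`
annihilating all the remaining members of the sequence, which finiteness forbids.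
-/

/-- `IsNFull n g` says that `1` is a sum of `n` terms `u * g * v`. It quantifies fullness, that is,
`g` generating the unit ideal, and serves as a ring-theoretic measure of the size
of `g`. -/
def IsNFull {R : Type*} [Semiring R] (n : ℕ) (g : R) : Prop :=
  ∃ u v : Fin n → R, ∑ i, u i * g * v i = 1

section Ring

variable {R : Type*} [Ring R]

lemma IsNFull.of_isUnit {n : ℕ} {g : R} {u v : Fin n → R} (h : IsUnit (∑ i, u i * g * v i)) :
    IsNFull n g := by
  obtain ⟨s, hs⟩ := h
  refine ⟨fun i => ↑s⁻¹ * u i, v, ?_⟩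
  rw [← s.inv_mul, hs, Finset.mul_sum]
  simp only [mul_assoc]

lemma IsNFull.of_mul_mul {n : ℕ} {l x r : R} (h : IsNFull n (l * x * r)) : IsNFull n x := by
  obtain ⟨u, v, huv⟩ := h
  exact ⟨fun i => u i * l, fun i => r * v i, by simpa only [mul_assoc] using huv⟩

open scoped Pointwise in
lemma exists_isNFull_of_ne_zero [IsSimpleRing R] {g : R} (hg : g ≠ 0) : ∃ n, IsNFull n g := by
  suffices h : ∀ x ∈ AddSubgroup.closure (Set.univ * {g} * Set.univ),
      ∃ (n : ℕ) (u v : Fin n → R), ∑ i, u i * g * v i = x from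
    h 1 <| TwoSidedIdeal.mem_span_iff_mem_addSubgroup_closure.1 <|
      IsSimpleRing.one_mem_of_ne_zero_mem _ hg (TwoSidedIdeal.subset_span rfl)
  intro x hx
  induction hx using AddSubgroup.closure_induction with
  | mem x hx =>
    obtain ⟨_, ⟨u, -, _, rfl, rfl⟩, v, -, rfl⟩ := hx
    exact ⟨1, fun _ => u, fun _ => v, by simp⟩
  | zero => exact ⟨0, Fin.elim0, Fin.elim0, by simp⟩
  | add x y _ _ hx hy =>
    obtain ⟨m, u, v, rfl⟩ := hx
    obtain ⟨n, u', v', rfl⟩ := hy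
    exact ⟨m + n, Fin.append u u', Fin.append v v', by simp [Fin.sum_univ_add]⟩
  | neg x _ hx =>
    obtain ⟨n, u, v, rfl⟩ := hx
    exact ⟨n, -u, v, by simp⟩

lemma exists_mul_mul_ne_zero [IsSimpleRing R] {p q : R} (hp : p ≠ 0) (hq : q ≠ 0) :
    ∃ z, p * z * q ≠ 0 := by
  by_contra! h
  obtain ⟨n, u, v, huv⟩ := exists_isNFull_of_ne_zero hq
  apply hp
  rw [← mul_one p, ← huv, Finset.mul_sum]
  refine Finset.sum_eq_zero fun i _ => ?_
  rw [← mul_assoc, ← mul_assoc, h, zero_mul]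

lemma exists_common_multiple [IsSimpleRing R] {q : R} (hq : q ≠ 0) {n : ℕ} (g : Fin n → R)
    (hg : ∀ i, g i ≠ 0) :
    ∃ e ∈ Ideal.span {q}, e ≠ 0 ∧ ∀ i, ∃ l r, e = l * g i * r := by
  induction n with
  | zero => exact ⟨q, Ideal.mem_span_singleton_self q, hq, fun i => i.elim0⟩
  | succ n ih =>
    obtain ⟨e, heq, he, hdvd⟩ := ih (Fin.tail g) fun i => hg i.succ
    obtain ⟨z, hz⟩ := exists_mul_mul_ne_zero (hg 0) he
    refine ⟨g 0 * z * e, Ideal.mul_mem_left _ _ heq, hz, Fin.cases ⟨1, z * e, ?_⟩ fun i => ?_⟩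
    · rw [one_mul, mul_assoc]
    · obtain ⟨l, r, hlr⟩ := hdvd i
      refine ⟨g 0 * z * l, r, ?_⟩
      rw [hlr]
      simp only [Fin.tail, mul_assoc]

lemma finite_of_corner_eq_smul {K : Type*} [CommSemiring K] [Algebra K R] {n : ℕ} {p : R}
    (hp : IsNFull n p) (h : ∀ b, ∃ c : K, p * b * p = c • p) : Module.Finite K R := by
  obtain ⟨u, v, huv⟩ := hp
  let f : Fin n × Fin n → R := fun i => u i.1 * p * v i.2
  have htop : Submodule.span K (Set.range f) = ⊤ := by
    refine eq_top_iff.2 fun b _ => ?_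
    have hb : b = ∑ i, ∑ j, u i * (p * (v i * b * u j) * p) * v j := by
      conv_lhs => rw [← one_mul b, ← mul_one (1 * b), ← huv, Finset.sum_mul, Finset.sum_mul_sum]
      simp only [mul_assoc]
    rw [hb]
    refine Submodule.sum_mem _ fun i _ => Submodule.sum_mem _ fun j _ => ?_
    obtain ⟨c, hc⟩ := h (v i * b * u j)
    rw [hc, mul_smul_comm, smul_mul_assoc]
    exact Submodule.smul_mem _ _ (Submodule.subset_span ⟨(i, j), rfl⟩)
  exact Module.finite_def.2 (htop ▸ Submodule.fg_span (Set.finite_range f))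

-- `∑ u i * e * v i` factors as `V * W` with `V * z = 0`; if it equals `1`, then also `W * V = 1`.
lemma eq_zero_of_isNFull_of_orthogonal [IsDedekindFiniteMonoid R] {n : ℕ} {f : Fin n → R}
    (hf : Pairwise fun i j => f i * f j = 0) {e : R}
    (he : ∀ i, ∃ l r, e = l * (f i * f i) * r) (hfull : IsNFull n e) {z : R}
    (hz : ∀ i, f i * z = 0) : z = 0 := by
  obtain ⟨u, v, huv⟩ := hfull
  choose l r hlr using he
  let V := ∑ i, u i * l i * f i
  let W := ∑ j, f j * r j * v j
  have hVW : V * W = 1 := by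
    rw [← huv, Finset.sum_mul_sum]
    refine Finset.sum_congr rfl fun i _ => ?_
    rw [Finset.sum_eq_single i]
    · rw [hlr i]
      simp only [mul_assoc]
    · intro j _ hji
      calc u i * l i * f i * (f j * r j * v j)
          = u i * l i * (f i * f j) * (r j * v j) := by simp only [mul_assoc]
        _ = 0 := by rw [hf hji.symm, mul_zero, zero_mul]
    · exact fun hi => absurd (Finset.mem_univ i) hi
  have hVz : V * z = 0 := by
    rw [Finset.sum_mul]
    exact Finset.sum_eq_zero fun i _ => by rw [mul_assoc, hz, mul_zero]
  calc z = W * V * z := by rw [mul_eq_one_symm hVW, one_mul]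
    _ = 0 := by rw [mul_assoc, hVz, mul_zero]

lemma exists_ne_zero_not_isNFull [IsSimpleRing R] [IsDedekindFiniteMonoid R] {f : ℕ → R}
    (hf : Pairwise fun i j => f i * f j = 0) (hf0 : ∀ i, f i * f i ≠ 0) {q : R} (hq : q ≠ 0)
    (n : ℕ) : ∃ e ∈ Ideal.span {q}, e ≠ 0 ∧ ¬IsNFull n e := by
  obtain ⟨e, heq, he, hdvd⟩ :=
    exists_common_multiple hq (fun i : Fin n => f i * f i) fun i => hf0 i
  refine ⟨e, heq, he, fun hfull => hf0 n ?_⟩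
  rw [eq_zero_of_isNFull_of_orthogonal (hf.comp_of_injective Fin.val_injective) hdvd hfull
    fun i => hf i.is_lt.ne, mul_zero]

-- The square of `y + (c / a) • x` has `y`-coefficient `3 * c` and `x`-coefficient `c ^ 2 / a`,
-- which are not in the ratio `1 : c / a`.
lemma exists_eq_smul_of_mul_self_eq_smul {K : Type*} [Field K] [CharZero K] [Algebra K R]
    {x y : R} {a c : K} (ha : a ≠ 0) (hc : c ≠ 0) (hx : x * x = a • x) (hy : y * y = c • y)
    (hxy : x * y = a • y) (hyx : y * x = a • y)
    (h : ∃ d : K, (a • y + c • x) * (a • y + c • x) = d • (a • y + c • x)) :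
    ∃ d : K, y = d • x := by
  obtain ⟨d, hd⟩ := h
  have key : (a * (3 * a * c - d)) • y = (c * (d - a * c)) • x := by
    simp only [add_mul, mul_add, smul_mul_smul_comm, hx, hy, hxy, hyx] at hd
    rw [← sub_eq_zero] at hd ⊢
    rw [← hd]
    module
  by_cases hd' : 3 * a * c - d = 0
  · have hx0 : x = 0 := by
      have hcoef : c * (d - a * c) ≠ 0 := by
        rw [← sub_eq_zero.1 hd']
        have : c * (3 * a * c - a * c) = 2 * a * c * c := by ring
        rw [this]
        exact mul_ne_zero (mul_ne_zero (mul_ne_zero two_ne_zero ha) hc) hc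
      simpa [hd', hcoef] using key.symm
    refine ⟨0, ?_⟩
    rw [hx0, zero_mul] at hxy
    simpa [ha] using hxy.symm
  · exact ⟨(a * (3 * a * c - d))⁻¹ * (c * (d - a * c)), by
      rw [mul_smul, ← key, inv_smul_smul₀ (mul_ne_zero ha hd')]⟩

end Ring

lemma IsPos.isSelfAdjoint {R : Type*} [Mul R] [StarMul R] {x : R} (hx : IsPos x) :
    IsSelfAdjoint x := by
  obtain ⟨y, rfl⟩ := hx
  exact .star_mul_self y

lemma mul_self_eq_zero_iff_of_isSelfAdjoint {R : Type*} [NonUnitalNormedRing R] [StarRing R]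
    [CStarRing R] {x : R} (hx : IsSelfAdjoint x) : x * x = 0 ↔ x = 0 := by
  rw [← CStarRing.star_mul_self_eq_zero_iff x, hx.star_eq]

lemma IsSimpleCStarAlgebra.isSimpleRing {R : Type*} [NormedRing R] [HasSummableGeomSeries R]
    (hR : IsSimpleCStarAlgebra R) : IsSimpleRing R := by
  have := hR.1
  refine .of_eq_bot_or_eq_top fun I => or_iff_not_imp_left.2 fun hI => ?_
  let J : TwoSidedIdeal R := .mk' (closure I) (subset_closure I.zero_mem)
    (fun hx hy => map_mem_closure₂ continuous_add hx hy fun _ hx _ hy => I.add_mem hx hy)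
    (fun hx => map_mem_closure continuous_neg hx fun _ => I.neg_mem)
    (fun {x _} hy => map_mem_closure (continuous_const_mul x) hy fun z => I.mul_mem_left x z)
    (fun {_ y} hx => map_mem_closure (f := (· * y)) (continuous_mul_const y) hx
      fun z => I.mul_mem_right z y)
  have hJ : (J : Set R) = closure I := TwoSidedIdeal.coe_mk' ..
  have hJ0 : (J : Set R) ≠ {0} := fun h0 =>
    hI <| le_bot_iff.1 fun x hx => h0.subset (hJ ▸ subset_closure hx)
  have hone : (1 : R) ∈ closure I := by
    rw [← hJ, (hR.2 J (hJ ▸ isClosed_closure)).resolve_left hJ0]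
    trivial
  obtain ⟨_, ⟨s, rfl⟩, hs⟩ := mem_closure_iff.1 hone _ Units.isOpen isUnit_one
  rw [← I.one_mem_iff, ← s.inv_mul]
  exact I.mul_mem_left _ _ hs

lemma IsNFull.of_cuntzBelow {R : Type*} [NormedRing R] [HasSummableGeomSeries R] [Star R] {n : ℕ}
    {g x : R} (h : IsNFull n g) (hgx : CuntzBelow g x) : IsNFull n x := by
  obtain ⟨u, v, huv⟩ := h
  obtain ⟨w, hw⟩ := hgx
  have hlim : Tendsto (fun k => ∑ i, u i * (w k * x * star (w k)) * v i) atTop (𝓝 1) := by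
    rw [← huv]
    exact tendsto_finsetSum _ fun i _ =>
      ((tendsto_iff_norm_sub_tendsto_zero.2 hw).const_mul (u i)).mul_const (v i)
  obtain ⟨k, hk⟩ := (hlim.eventually (Units.isOpen.mem_nhds isUnit_one)).exists
  exact .of_mul_mul (.of_isUnit hk)

lemma CuntzBelow.conj {R : Type*} [NonUnitalNormedRing R] [StarMul R] {g x : R}
    (h : CuntzBelow g x) (b : R) : CuntzBelow (b * g * star b) x := by
  obtain ⟨v, hv⟩ := h
  refine ⟨fun n => b * v n, ?_⟩
  rw [← tendsto_iff_norm_sub_tendsto_zero] at hv ⊢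
  simpa only [star_mul, mul_assoc] using (hv.const_mul b).mul_const (star b)

lemma CuntzBelow.of_conj {R : Type*} [NonUnitalNormedRing R] [StarMul R] {g x l : R}
    (h : CuntzBelow g (l * x * star l)) : CuntzBelow g x := by
  obtain ⟨v, hv⟩ := h
  exact ⟨fun n => v n * l, by simpa only [star_mul, mul_assoc] using hv⟩

lemma exists_cutPos_eq_conj {m : A} (hm : IsSelfAdjoint m) {ε : ℝ} (hε : 0 < ε) :
    ∃ k : A, CutPos m ε = k * m * star k := by
  let f : ℝ → ℝ := fun t => √(max (t - ε) 0 / max t ε)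
  have hf : Continuous f := Real.continuous_sqrt.comp <|
    .div (by fun_prop) (by fun_prop) fun t => (lt_max_of_lt_right hε).ne'
  have hft : ∀ t, f t * t * f t = max (t - ε) 0 := fun t => by
    rw [mul_right_comm, Real.mul_self_sqrt (by positivity)]
    rcases le_total t ε with ht | ht
    · simp [max_eq_right (sub_nonpos.2 ht)]
    · rw [max_eq_left ht, div_mul_cancel₀ _ (hε.trans_le ht).ne']
  refine ⟨cfc f m, ?_⟩
  calc CutPos m ε = cfc (fun t => f t * t * f t) m := by simp only [CutPos, hft]
    _ = cfc f m * m * cfc f m := by rw [cfc_mul _ _ m, cfc_mul _ _ m, cfc_id' ℝ m]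
    _ = cfc f m * m * star (cfc f m) := by rw [(cfc_predicate f m : IsSelfAdjoint _).star_eq]

lemma CuntzBelow.cutPos {m x : A} (h : CuntzBelow m x) (hm : IsSelfAdjoint m) {ε : ℝ}
    (hε : 0 < ε) : CuntzBelow (CutPos m ε) x := by
  obtain ⟨k, hk⟩ := exists_cutPos_eq_conj hm hε
  exact hk ▸ h.conj k

section Order

variable [PartialOrder A] [StarOrderedRing A]

lemma isUnit_star_mul_self_of_mul_eq_one {a b : A} (h : a * b = 1) : IsUnit (star b * b) := by
  have hle : 1 ≤ ‖star a * a‖ • (star b * b) := by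
    calc (1 : A) = star b * (star a * a) * b := by
          rw [← mul_assoc, ← star_mul, mul_assoc, h, star_one, one_mul]
      _ ≤ ‖star a * a‖ • (star b * b) := CStarAlgebra.star_left_conjugate_le_norm_smul
  have hunit := CStarAlgebra.isUnit_of_le 1 hle
  rw [Algebra.smul_def, (Algebra.commute_algebraMap_left _ _).isUnit_mul_iff] at hunit
  exact hunit.2

lemma exists_star_mul_self_mul_eq_one {b : A} (h : IsUnit (star b * b)) :
    ∃ q : A, star (b * q) * (b * q) = 1 := by
  have hpos : IsStrictlyPositive (star b * b) := h.isStrictlyPositive (star_mul_self_nonneg b)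
  refine ⟨(star b * b) ^ (-(1 / 2) : ℝ), ?_⟩
  rw [star_mul, (IsSelfAdjoint.of_nonneg CFC.rpow_nonneg).star_eq, mul_assoc, ← mul_assoc (star b),
    ← mul_assoc, CFC.conjugate_rpow_neg_one_half _ hpos]

-- Cauchy–Schwarz: `u * d * v + star (u * d * v) ≤ (u + star v) * d * star (u + star v)`.
lemma IsNFull.mono {n : ℕ} {d c : A} (h : IsNFull n d) (hd : 0 ≤ d) (hdc : d ≤ c) :
    IsNFull n c := by
  obtain ⟨u, v, huv⟩ := h
  have hds : star d = d := (IsSelfAdjoint.of_nonneg hd).star_eq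
  have hterm : ∀ i, u i * d * v i + star (u i * d * v i) ≤
      (u i + star (v i)) * c * star (u i + star (v i)) := fun i => by
    refine le_trans ?_ (star_right_conjugate_le_conjugate hdc _)
    rw [← sub_nonneg]
    convert add_nonneg (star_right_conjugate_nonneg hd (u i))
      (star_left_conjugate_nonneg hd (v i)) using 1
    simp only [star_mul, star_add, star_star, hds]
    noncomm_ring
  have hle : 1 ≤ ∑ i, (u i + star (v i)) * c * star (u i + star (v i)) :=
    calc (1 : A) ≤ 1 + star 1 := by rw [star_one]; exact le_add_of_nonneg_right zero_le_one
      _ = ∑ i, (u i * d * v i + star (u i * d * v i)) := by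
        rw [Finset.sum_add_distrib, ← star_sum, huv]
      _ ≤ _ := Finset.sum_le_sum fun i _ => hterm i
  exact .of_isUnit (CStarAlgebra.isUnit_of_le 1 hle)

lemma exists_conjugate_sub_algebraMap_pos [Nontrivial A] {x : A} (hx : 0 ≤ x) {c : ℝ}
    (hc : c < ‖x‖) : ∃ k : A, IsSelfAdjoint k ∧ 0 < k * (x - algebraMap ℝ A c) * k := by
  set m : A := x - algebraMap ℝ A c
  have hm : IsSelfAdjoint m := (IsSelfAdjoint.of_nonneg hx).sub (.algebraMap A (.all c))
  have hk : IsSelfAdjoint m⁺ := IsSelfAdjoint.of_nonneg (CFC.posPart_nonneg m)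
  have hk0 : m⁺ ≠ 0 := fun h0 => by
    have hxc : x ≤ algebraMap ℝ A c := sub_nonpos.1 ((CFC.posPart_eq_zero_iff m hm).1 h0)
    exact hc.not_ge <| (le_algebraMap_iff_spectrum_le (IsSelfAdjoint.of_nonneg hx)).1 hxc _
      (CStarAlgebra.norm_mem_spectrum_of_nonneg hx)
  have hcube : m⁺ * m * m⁺ = m⁺ * m⁺ * m⁺ := by
    nth_rw 2 [← CFC.posPart_sub_negPart m hm]
    rw [mul_sub, CFC.posPart_mul_negPart, sub_zero]
  refine ⟨m⁺, hk, lt_of_le_of_ne ?_ (Ne.symm ?_)⟩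
  · rw [hcube]
    exact hk.conjugate_nonneg (CFC.posPart_nonneg m)
  · rw [hcube]
    intro h0
    have hsq : m⁺ * m⁺ = 0 := (CStarRing.star_mul_self_eq_zero_iff _).1 <| by
      rw [star_mul, hk.star_eq, ← mul_assoc, h0, zero_mul]
    exact hk0 ((mul_self_eq_zero_iff_of_isSelfAdjoint hk).1 hsq)

end Order

lemma isDedekindFiniteMonoid_of_isometry (h : ∀ v : A, star v * v = 1 → v * star v = 1) :
    IsDedekindFiniteMonoid A where
  mul_eq_one_symm {a b} hab := by
    let _ := CStarAlgebra.spectralOrder A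
    have _ := CStarAlgebra.spectralOrderedRing A
    obtain ⟨q, hq⟩ := exists_star_mul_self_mul_eq_one (isUnit_star_mul_self_of_mul_eq_one hab)
    have hright := h _ hq
    rw [mul_assoc] at hright
    rwa [left_inv_eq_right_inv hab hright]

-- `‖r * (star z * z) * r‖ ≤ c` means `z * (r * r) * star z ≤ c`, so `z * (1 - r * r) * star z`,
-- a multiple of `1 - r`, dominates `z * star z - c`, whose positive part does not depend on `r`.
lemma exists_forall_isNFull_one_sub [IsSimpleRing A] {z : A} {c : ℝ} (hc : c < ‖star z * z‖) :
    ∃ n, ∀ r : A, IsSelfAdjoint r → ‖r * (star z * z) * r‖ ≤ c → IsNFull n (1 - r) := by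
  let _ := CStarAlgebra.spectralOrder A
  have _ := CStarAlgebra.spectralOrderedRing A
  rw [CStarRing.norm_star_mul_self, ← CStarRing.norm_self_mul_star] at hc
  obtain ⟨k, hk, hpos⟩ := exists_conjugate_sub_algebraMap_pos (mul_star_self_nonneg z) hc
  obtain ⟨n, hn⟩ := exists_isNFull_of_ne_zero hpos.ne'
  refine ⟨n, fun r hr hrc => ?_⟩
  have hnorm : ‖z * r * star (z * r)‖ = ‖r * (star z * z) * r‖ := by
    rw [CStarRing.norm_self_mul_star, ← CStarRing.norm_star_mul_self, star_mul, hr.star_eq]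
    simp only [mul_assoc]
  have hle : z * r * star (z * r) ≤ algebraMap ℝ A c :=
    (CStarAlgebra.norm_le_iff_le_algebraMap _ ((norm_nonneg _).trans hrc)
      (mul_star_self_nonneg _)).1 (hnorm.trans_le hrc)
  have hdom : k * (z * star z - algebraMap ℝ A c) * k ≤
      k * z * (1 - r) * ((1 + r) * star z * k) :=
    calc k * (z * star z - algebraMap ℝ A c) * k
        ≤ k * (z * star z - z * r * star (z * r)) * k := by
          simpa only [hk.star_eq] using star_right_conjugate_le_conjugate (sub_le_sub_left hle _) k
      _ = k * z * (1 - r) * ((1 + r) * star z * k) := by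
          rw [star_mul, hr.star_eq]
          noncomm_ring
  exact (hn.mono hpos.le hdom).of_mul_mul

section OrthogonalSequence

lemma mul_eq_zero_comm_of_isSelfAdjoint {R : Type*} [NonUnitalNonAssocSemiring R] [StarRing R]
    {x y : R} (hx : IsSelfAdjoint x) (hy : IsSelfAdjoint y) : x * y = 0 ↔ y * x = 0 := by
  rw [← star_eq_zero, star_mul, hx.star_eq, hy.star_eq]

lemma exists_orthogonal_of_mem_spectrum {y : A} (hy : IsSelfAdjoint y) {c d : ℝ}
    (hc : c ∈ spectrum ℝ y) (hd : d ∈ spectrum ℝ y) (hc0 : c ≠ 0) (hd0 : d ≠ 0) (hcd : c < d) :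
    ∃ p ∈ Ideal.span {y}, ∃ q ∈ Ideal.span {y}, IsSelfAdjoint p ∧ IsSelfAdjoint q ∧
      p ≠ 0 ∧ q ≠ 0 ∧ p * q = 0 := by
  let m := (c + d) / 2
  let f : ℝ → ℝ := fun t => max (m - t) 0
  let g : ℝ → ℝ := fun t => max (t - m) 0
  have hf : Continuous f := by fun_prop
  have hg : Continuous g := by fun_prop
  have hmem : ∀ h : ℝ → ℝ, Continuous h → cfc (fun t => h t * t) y ∈ Ideal.span {y} :=
    fun h hh => by
      rw [cfc_mul _ _ y, cfc_id' ℝ y]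
      exact Ideal.mul_mem_left _ _ (Ideal.mem_span_singleton_self y)
  have hne : ∀ h : ℝ → ℝ, Continuous h → ∀ e ∈ spectrum ℝ y, h e ≠ 0 → e ≠ 0 →
      cfc (fun t => h t * t) y ≠ 0 := fun h hh e he hhe he0 h0 => by
    rw [← cfc_const_zero ℝ y] at h0
    exact mul_ne_zero hhe he0 (eqOn_of_cfc_eq_cfc h0 (by fun_prop) (by fun_prop) hy he)
  have hfg : ∀ t, f t * t * (g t * t) = 0 := fun t => by
    rcases le_total t m with ht | ht
    · simp [g, max_eq_right (sub_nonpos.2 ht)]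
    · simp [f, max_eq_right (sub_nonpos.2 ht)]
  refine ⟨_, hmem f hf, _, hmem g hg, cfc_predicate _ y, cfc_predicate _ y,
    hne f hf c hc (lt_max_of_lt_left ?_).ne' hc0, hne g hg d hd (lt_max_of_lt_left ?_).ne' hd0, ?_⟩
  · simp only [m]; linarith
  · simp only [m]; linarith
  · rw [← cfc_mul _ _ y, ← cfc_const_zero ℝ y]
    simp only [hfg]

lemma exists_mul_self_eq_smul {y : A} (hy : IsSelfAdjoint y)
    (hspec : (spectrum ℝ y \ {0}).Subsingleton) : ∃ c : ℝ, y * y = c • y := by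
  obtain ⟨c, hc⟩ : ∃ c : ℝ, ∀ t ∈ spectrum ℝ y, t * t = c * t := by
    rcases hspec.eq_empty_or_singleton with h0 | ⟨c, hc⟩
    · exact ⟨0, fun t ht => by simpa using Set.sdiff_eq_empty.1 h0 ht⟩
    · refine ⟨c, fun t ht => ?_⟩
      by_cases ht0 : t = 0
      · simp [ht0]
      · rw [hc.subset ⟨ht, ht0⟩]
  refine ⟨c, ?_⟩
  calc y * y = cfc (fun t : ℝ => t * t) y := by rw [cfc_mul _ _ y, cfc_id' ℝ y]
    _ = cfc (fun t : ℝ => c * t) y := cfc_congr hc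
    _ = c • y := cfc_const_mul_id c y

lemma exists_orthogonal_or_mul_self_eq_smul {y : A} (hy : IsSelfAdjoint y) :
    (∃ p ∈ Ideal.span {y}, ∃ q ∈ Ideal.span {y}, IsSelfAdjoint p ∧ IsSelfAdjoint q ∧
      p ≠ 0 ∧ q ≠ 0 ∧ p * q = 0) ∨ ∃ c : ℝ, y * y = c • y := by
  by_cases hspec : (spectrum ℝ y \ {0}).Subsingleton
  · exact .inr (exists_mul_self_eq_smul hy hspec)
  · obtain ⟨c, ⟨hc, hc0⟩, d, ⟨hd, hd0⟩, hcd⟩ := (Set.not_subsingleton_iff.1 hspec).exists_lt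
    exact .inl (exists_orthogonal_of_mem_spectrum hy hc hd hc0 hd0 hcd)

lemma exists_corner_eq_smul {x : A} (hx : IsSelfAdjoint x)
    (hsq : ∀ y ∈ Ideal.span {x}, IsSelfAdjoint y → ∃ c : ℝ, y * y = c • y) (b : A) :
    ∃ c : ℂ, x * b * x = c • x := by
  have hsq_ne : ∀ y ∈ Ideal.span {x}, IsSelfAdjoint y → y ≠ 0 →
      ∃ c : ℝ, c ≠ 0 ∧ y * y = c • y := fun y hyx hy hy0 => by
    obtain ⟨c, hc⟩ := hsq y hyx hy
    refine ⟨c, ?_, hc⟩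
    rintro rfl
    rw [zero_smul] at hc
    exact hy0 ((mul_self_eq_zero_iff_of_isSelfAdjoint hy).1 hc)
  have hxx : x ∈ Ideal.span {x} := Ideal.mem_span_singleton_self x
  have hreal : ∀ b : A, IsSelfAdjoint b → ∃ c : ℝ, x * b * x = c • x := fun b hb => by
    by_cases hy0 : x * b * x = 0
    · exact ⟨0, by rw [hy0, zero_smul]⟩
    have hx0 : x ≠ 0 := by
      rintro rfl
      simp at hy0
    have hyx : x * b * x ∈ Ideal.span {x} := Ideal.mul_mem_left _ _ hxx
    have hy : IsSelfAdjoint (x * b * x) := by simpa only [hx.star_eq] using hb.conjugate x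
    obtain ⟨a, ha, hxa⟩ := hsq_ne x hxx hx hx0
    obtain ⟨c, hc, hyc⟩ := hsq_ne _ hyx hy hy0
    refine exists_eq_smul_of_mul_self_eq_smul ha hc hxa hyc ?_ ?_ (hsq _ ?_ ?_)
    · rw [← mul_assoc, ← mul_assoc, hxa, smul_mul_assoc, smul_mul_assoc]
    · rw [mul_assoc, hxa, mul_smul_comm]
    · exact add_mem (Submodule.smul_of_tower_mem _ a hyx) (Submodule.smul_of_tower_mem _ c hxx)
    · exact ((IsSelfAdjoint.all a).smul hy).add ((IsSelfAdjoint.all c).smul hx)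
  obtain ⟨c, hc⟩ := hreal (realPart b : A) (realPart b).2
  obtain ⟨d, hd⟩ := hreal (imaginaryPart b : A) (imaginaryPart b).2
  refine ⟨c + Complex.I * d, ?_⟩
  conv_lhs => rw [← realPart_add_I_smul_imaginaryPart b]
  rw [mul_add, add_mul, hc, mul_smul_comm, smul_mul_assoc, hd, add_smul, mul_smul]
  simp only [Complex.coe_smul]

lemma exists_orthogonal_pair [IsSimpleRing A] (hinf : ¬FiniteDimensional ℂ A) {x : A}
    (hx : IsSelfAdjoint x) (hx0 : x ≠ 0) :
    ∃ p ∈ Ideal.span {x}, ∃ q ∈ Ideal.span {x}, IsSelfAdjoint p ∧ IsSelfAdjoint q ∧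
      p ≠ 0 ∧ q ≠ 0 ∧ p * q = 0 := by
  by_contra hpair
  obtain ⟨n, hn⟩ := exists_isNFull_of_ne_zero hx0
  refine hinf (finite_of_corner_eq_smul hn (exists_corner_eq_smul hx fun y hyx hy => ?_))
  have hle : Ideal.span {y} ≤ Ideal.span {x} := (Ideal.span_singleton_le_iff_mem _).2 hyx
  refine (exists_orthogonal_or_mul_self_eq_smul hy).resolve_left ?_
  rintro ⟨p, hp, q, hq, h⟩
  exact hpair ⟨p, hle hp, q, hle hq, h⟩

lemma exists_orthogonal_sequence [IsSimpleRing A] (hinf : ¬FiniteDimensional ℂ A) :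
    ∃ f : ℕ → A, (∀ i, IsSelfAdjoint (f i)) ∧ (∀ i, f i ≠ 0) ∧
      Pairwise fun i j => f i * f j = 0 := by
  let S := {x : A // IsSelfAdjoint x ∧ x ≠ 0}
  have hpair : ∀ x : S, ∃ p q : S, p.1 ∈ Ideal.span {x.1} ∧ q.1 ∈ Ideal.span {x.1} ∧
      p.1 * q.1 = 0 := fun ⟨x, hx, hx0⟩ => by
    obtain ⟨p, hpx, q, hqx, hp, hq, hp0, hq0, hpq⟩ := exists_orthogonal_pair hinf hx hx0
    exact ⟨⟨p, hp, hp0⟩, ⟨q, hq, hq0⟩, hpx, hqx, hpq⟩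
  choose p q hp hq hpq using hpair
  let s : ℕ → S := fun n => q^[n] ⟨1, .one A, one_ne_zero⟩
  have hs : ∀ n, s (n + 1) = q (s n) := fun n => Function.iterate_succ_apply' q n _
  have hanti : Antitone fun n => Ideal.span {(s n).1} := antitone_nat_of_succ_le fun n => by
    rw [hs]
    exact (Ideal.span_singleton_le_iff_mem _).2 (hq (s n))
  have hlt : ∀ i j, i < j → (p (s j)).1 * (p (s i)).1 = 0 := fun i j hij => by
    obtain ⟨a, ha⟩ := Ideal.mem_span_singleton'.1 (hanti (Nat.succ_le_of_lt hij) (hp (s j)))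
    rw [← ha, Nat.succ_eq_add_one, hs, mul_assoc,
      (mul_eq_zero_comm_of_isSelfAdjoint (p _).2.1 (q _).2.1).1 (hpq (s i)), mul_zero]
  refine ⟨fun i => (p (s i)).1, fun i => (p (s i)).2.1, fun i => (p (s i)).2.2, fun i j hij => ?_⟩
  rcases hij.lt_or_gt with h | h
  · exact (mul_eq_zero_comm_of_isSelfAdjoint (p _).2.1 (p _).2.1).1 (hlt i j h)
  · exact hlt j i h

end OrthogonalSequence

lemma exists_ne_zero_forall_lt_norm [IsSimpleRing A] [IsDedekindFiniteMonoid A]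
    (hinf : ¬FiniteDimensional ℂ A) {z : A} (hz : z ≠ 0) {c : ℝ} (hc : c < ‖star z * z‖) :
    ∃ e ∈ Ideal.span {star z}, e ≠ 0 ∧ ∀ r : A, IsSelfAdjoint r →
      CuntzBelow (1 - r) (e * star e) → c < ‖r * (star z * z) * r‖ := by
  obtain ⟨n, hn⟩ := exists_forall_isNFull_one_sub hc
  obtain ⟨f, hf, hf0, horth⟩ := exists_orthogonal_sequence hinf
  obtain ⟨e, hez, he0, hen⟩ := exists_ne_zero_not_isNFull horth
    (fun i => (mul_self_eq_zero_iff_of_isSelfAdjoint (hf i)).not.2 (hf0 i)) (star_ne_zero.2 hz) n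
  refine ⟨e, hez, he0, fun r hr hcuntz => ?_⟩
  by_contra! hle
  have hfull : IsNFull n (e * star e) := (hn r hr hle).of_cuntzBelow hcuntz
  exact hen (.of_mul_mul (l := 1) (r := star e) (by rwa [one_mul]))

/-- Let `Ω` be a class of C*-algebras and `A` a finite,
infinite-dimensional, simple, unital C*-algebra.  If for every `ε > 0`, finite
`F ⊆ A` and nonzero positive `a`, there are a C*-subalgebra `B ∈ Ω` and a positive
contraction `r ∈ B` with `rx ∈_ε B`, `xr ∈_ε B`, `‖rx - xr‖ < ε` for `x ∈ F`, and
`1 - r ≾_A a`, then `A ∈ GTAΩ`. -/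
theorem memGTA_of_approx
    (hfin : ∀ v : A, star v * v = 1 → v * star v = 1)
    (hinf : ¬ FiniteDimensional ℂ A)
    (hA : IsSimpleCStarAlgebra A)
    (Ω : Set (NonUnitalStarSubalgebra ℂ A))
    (h : ∀ ε : ℝ, 0 < ε → ∀ F : Finset A, ∀ a : A, IsPos a → a ≠ 0 →
      ∃ B ∈ Ω, IsClosed (B : Set A) ∧
        ∃ r ∈ B, IsPos r ∧ ‖r‖ ≤ 1 ∧
          (∀ x ∈ F, ApproxIn (r * x) (B : Set A) ε ∧ ApproxIn (x * r) (B : Set A) ε) ∧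
          (∀ x ∈ F, ‖r * x - x * r‖ < ε) ∧
          CuntzBelow (1 - r) a) :
    MemGTA Ω := by
  have _ : IsSimpleRing A := hA.isSimpleRing
  have _ : IsDedekindFiniteMonoid A := isDedekindFiniteMonoid_of_isometry hfin
  rintro ε hε F _ b ⟨z, rfl⟩ hz hb -
  have hz0 : z ≠ 0 := by
    rintro rfl
    simp at hz
  obtain ⟨e, hez, he0, hnorm⟩ := exists_ne_zero_forall_lt_norm hinf hz0
    (c := 1 - ε) (by rw [hz]; exact sub_lt_self 1 hε)
  obtain ⟨l, rfl⟩ := Ideal.mem_span_singleton'.1 hez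
  obtain ⟨B, hBΩ, hB, r, hrB, hr, hr1, hrF, hcomm, hcuntz⟩ := h ε hε F
    (l * star z * star (l * star z)) ⟨star (l * star z), by rw [star_star]⟩
    ((CStarRing.mul_star_self_ne_zero_iff _).2 he0)
  refine ⟨B, hBΩ, hB, r, hrB, hr, hr1, hrF, hcomm, ?_, (hnorm r hr.isSelfAdjoint hcuntz).le⟩
  have hconj : b * b - b * r * b = b * (1 - r) * star b := by
    rw [hb.isSelfAdjoint.star_eq]
    noncomm_ring
  have hfactor : l * star z * star (l * star z) = l * (star z * z) * star l := by
    simp only [star_mul, star_star, mul_assoc]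
  rw [hfactor] at hcuntz
  rw [hconj]
  exact (hcuntz.of_conj.conj b).cutPos
    (((IsSelfAdjoint.one A).sub hr.isSelfAdjoint).conjugate b) hε
end
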